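/- arXiv:2304.09455 — 3 statements merged into one kernel-verified Lean document; each statement's English description precedes it below -/
import Mathlib

section
/- For every rational number x there exists a natural number t with t < x.den such that the t-th iterate T^[t](x) is an integer; in particular the c-series expansion of every rational number is finite, of length at most x.den. -/
/-- The even-rounded floor `c(x)`: equal to `x` if `x` is an integer; otherwise
`⌊x⌋` if `⌊x⌋` is even and `⌊x⌋ + 1` if `⌊x⌋` is odd. -/
noncomputable def evenFloor (x : ℚ) : ℤ :=
  if x.den = 1 then x.num
  else if Even ⌊x⌋ then ⌊x⌋ else ⌊x⌋ + 1

/-- The step map of the even continued fraction (c-series) expansion: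
`T x = (x - c x)⁻¹` if `x` is not an integer, and `T x = 0` otherwise. -/
noncomputable def stepMap (x : ℚ) : ℚ :=
  if x.den = 1 then 0 else (x - evenFloor x)⁻¹

/-! Subtracting the integer `c x` keeps the denominator of `x`, and since `|x - c x| < 1` the
numerator of `x - c x` is smaller in absolute value than that denominator. Inversion makes it the
new denominator, so the denominators strictly decrease until an integer is reached. -/

theorem exists_le_iterate_of_measure_lt {α : Type*} {f : α → α} {p : α → Prop} {μ : α → ℕ}
    (hμ : ∀ a, ¬p a → μ (f a) < μ a) (a : α) : ∃ t ≤ μ a, p (f^[t] a) := by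
  induction hn : μ a using Nat.strong_induction_on generalizing a with
  | _ n ih =>
    subst hn
    by_cases ha : p a
    · exact ⟨0, Nat.zero_le _, ha⟩
    · obtain ⟨t, ht, hpt⟩ := ih _ (hμ a ha) (f a) rfl
      exact ⟨t + 1, ht.trans_lt (hμ a ha), hpt⟩

theorem natAbs_num_lt_den_iff {q : ℚ} : q.num.natAbs < q.den ↔ |q| < 1 := by
  rw [← Rat.num_lt_denom_iff, Rat.num_abs_eq_abs_num, Rat.den_abs_eq_den, Int.abs_eq_natAbs,
    Nat.cast_lt]

theorem den_inv_lt_den_of_abs_lt_one {q : ℚ} (hq₀ : q ≠ 0) (hq₁ : |q| < 1) :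
    q⁻¹.den < q.den := by
  rw [Rat.den_inv_of_ne_zero hq₀]
  exact natAbs_num_lt_den_iff.mpr hq₁

theorem ne_intCast_of_den_ne_one {x : ℚ} (hx : x.den ≠ 1) (n : ℤ) : x ≠ n := by
  rintro rfl
  exact hx (Rat.den_intCast n)

theorem abs_sub_evenFloor_lt_one (x : ℚ) : |x - evenFloor x| < 1 := by
  unfold evenFloor
  split_ifs with hx
  · rw [(Rat.den_eq_one_iff x).mp hx, sub_self, abs_zero]
    exact one_pos
  · rw [Int.self_sub_floor, Int.abs_fract]
    exact Int.fract_lt_one x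
  · have fract_pos : 0 < Int.fract x := Int.fract_pos.mpr (ne_intCast_of_den_ne_one hx ⌊x⌋)
    have sub_eq : x - (⌊x⌋ + 1 : ℤ) = Int.fract x - 1 := by
      rw [Int.cast_add, Int.cast_one, ← sub_sub, Int.self_sub_floor]
    rw [sub_eq, abs_lt]
    constructor <;> linarith [Int.fract_lt_one x]

theorem den_stepMap_lt {x : ℚ} (hx : x.den ≠ 1) : (stepMap x).den < x.den := by
  have remainder_ne_zero : x - evenFloor x ≠ 0 := sub_ne_zero.mpr (ne_intCast_of_den_ne_one hx _)
  calc (stepMap x).den = (x - evenFloor x)⁻¹.den := by rw [stepMap, if_neg hx]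
    _ < (x - evenFloor x).den :=
      den_inv_lt_den_of_abs_lt_one remainder_ne_zero (abs_sub_evenFloor_lt_one x)
    _ = x.den := Rat.sub_intCast_den x _

/-- For every rational `x` there is `t < x.den` with `T^[t] x` an integer:
the c-series expansion of every rational is finite, of length at most `x.den`. -/
theorem stepMap_iterate_isInt (x : ℚ) :
    ∃ t : ℕ, t < x.den ∧ (stepMap^[t] x).den = 1 := by
  have den_sub_one_lt (y : ℚ) (hy : y.den ≠ 1) : (stepMap y).den - 1 < y.den - 1 :=
    Nat.sub_lt_sub_right (stepMap y).den_pos (den_stepMap_lt hy)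
  obtain ⟨t, ht, hden⟩ := exists_le_iterate_of_measure_lt (μ := fun y ↦ y.den - 1) den_sub_one_lt x
  exact ⟨t, Nat.lt_of_le_pred x.den_pos ht, hden⟩
end

section
/- For every rational number x that is not an integer, the rational number T(x) satisfies: its denominator equals |x.num − c(x)·x.den|, the absolute value of its numerator equals x.den, and its denominator is strictly smaller than x.den. -/
/-!
Subtracting the integer `c x` leaves the denominator of `x` unchanged, and inversion exchanges
numerator and denominator up to sign. Since `c x` is always `⌊x⌋` or `⌈x⌉`, the difference
`x - c x` has absolute value less than `1`, so its numerator, which becomes the new denominator,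
is smaller in absolute value than `x.den`.
-/

theorem sub_intCast_num (q : ℚ) (n : ℤ) : (q - n).num = q.num - n * q.den := by
  have h : ((q - n).num : ℚ) = q.num - n * q.den := by
    rw [← Rat.mul_den_eq_num (q - n), Rat.sub_intCast_den, sub_mul, Rat.mul_den_eq_num]
  exact_mod_cast h

theorem natAbs_num_inv_of_ne_zero {q : ℚ} (hq : q ≠ 0) : q⁻¹.num.natAbs = q.den := by
  rw [Rat.num_inv, Int.natAbs_mul, Int.natAbs_sign_of_ne_zero (Rat.num_ne_zero.mpr hq), one_mul,
    Int.natAbs_natCast]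

theorem den_inv_lt_den_iff {q : ℚ} (hq : q ≠ 0) : q⁻¹.den < q.den ↔ |q| < 1 := by
  rw [Rat.den_inv_of_ne_zero hq, natAbs_num_lt_den_iff]

theorem notMem_range_intCast_of_den_ne_one {q : ℚ} (hq : q.den ≠ 1) :
    q ∉ Set.range ((↑) : ℤ → ℚ) := by
  rintro ⟨n, rfl⟩
  exact hq (Rat.den_intCast n)

theorem sub_intCast_ne_zero_of_den_ne_one {q : ℚ} (hq : q.den ≠ 1) (n : ℤ) : q - n ≠ 0 := fun h =>
  notMem_range_intCast_of_den_ne_one hq ⟨n, (sub_eq_zero.mp h).symm⟩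

theorem evenFloor_eq_floor_or_eq_ceil (x : ℚ) : evenFloor x = ⌊x⌋ ∨ evenFloor x = ⌈x⌉ := by
  unfold evenFloor
  split_ifs with hx
  · left
    rw [← Rat.coe_int_num_of_den_eq_one hx, Int.floor_intCast, Rat.num_intCast]
  · exact Or.inl rfl
  · right
    have hceil : ⌈x⌉ = ⌊x⌋ + 1 :=
      (Int.ceil_eq_floor_add_one_iff_notMem x).mpr (notMem_range_intCast_of_den_ne_one hx)
    exact hceil.symm

/-- For a non-integer rational `x`, the denominator of `T x` equals
`|x.num - c x * x.den|`, the absolute value of the numerator of `T x`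
equals `x.den`, and the denominator strictly decreases. -/
theorem stepMap_num_den (x : ℚ) (hx : x.den ≠ 1) :
    (stepMap x).den = (x.num - evenFloor x * (x.den : ℤ)).natAbs ∧
      (stepMap x).num.natAbs = x.den ∧ (stepMap x).den < x.den := by
  have hT : stepMap x = (x - evenFloor x)⁻¹ := if_neg hx
  have h0 : x - evenFloor x ≠ 0 := sub_intCast_ne_zero_of_den_ne_one hx _
  have hden : (x - evenFloor x).den = x.den := Rat.sub_intCast_den x (evenFloor x)
  rw [hT]
  refine ⟨?_, ?_, ?_⟩
  · rw [Rat.den_inv_of_ne_zero h0, sub_intCast_num]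
  · rw [natAbs_num_inv_of_ne_zero h0, hden]
  · exact ((den_inv_lt_den_iff h0).mpr (abs_sub_evenFloor_lt_one x)).trans_eq hden
end

section
/- For every rational number x that is not an integer, the numerator of T(x) is congruent to the denominator of x modulo 2, and the denominator of T(x) is congruent to the numerator of x modulo 2; that is, one step of the even continued fraction expansion swaps the parities of the numerator and denominator. -/
/-! Since `c(x)` is even, passing from `x` to `x - c(x)` changes neither the denominator nor the
parity of the numerator. Inversion then interchanges numerator and denominator up to a sign, which
is invisible modulo `2`. -/

theorem rat_num_sub_intCast (x : ℚ) (n : ℤ) : (x - n).num = x.num - n * x.den := by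
  have h_cast : ((x - n).num : ℚ) = x.num - n * x.den := by
    rw [← Rat.mul_den_eq_num (x - n), Rat.sub_intCast_den, sub_mul, Rat.mul_den_eq_num]
  exact_mod_cast h_cast

theorem rat_num_sub_intCast_modEq (x : ℚ) {m n : ℤ} (hmn : m ∣ n) :
    (x - n).num ≡ x.num [ZMOD m] := by
  rw [rat_num_sub_intCast]
  exact Int.modEq_iff_dvd.mpr (by simpa using hmn.mul_right (x.den : ℤ))

theorem rat_sub_intCast_ne_zero_of_den_ne_one {x : ℚ} (hx : x.den ≠ 1) (n : ℤ) : x - n ≠ 0 := by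
  rw [sub_ne_zero]
  rintro rfl
  exact hx (Rat.den_intCast n)

theorem rat_num_inv_modEq_two_den {y : ℚ} (hy : y ≠ 0) : y⁻¹.num ≡ y.den [ZMOD 2] := by
  rw [Rat.num_inv]
  rcases (Rat.num_ne_zero.mpr hy).lt_or_gt with h_neg | h_pos
  · rw [Int.sign_eq_neg_one_of_neg h_neg, neg_one_mul]
    exact Int.neg_emod_two _
  · rw [Int.sign_eq_one_of_pos h_pos, one_mul]

theorem rat_den_inv_modEq_two_num {y : ℚ} (hy : y ≠ 0) : (y⁻¹.den : ℤ) ≡ y.num [ZMOD 2] := by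
  rw [Rat.den_inv_of_ne_zero hy, Int.ModEq]
  omega

theorem even_evenFloor {x : ℚ} (hx : x.den ≠ 1) : Even (evenFloor x) := by
  rw [evenFloor, if_neg hx]
  split_ifs with h_even
  · exact h_even
  · exact (Int.not_even_iff_odd.mp h_even).add_one

/-- One step of the even continued fraction expansion swaps the parities of
the numerator and denominator: for non-integer `x`, `(T x).num ≡ x.den [ZMOD 2]`
and `(T x).den ≡ x.num [ZMOD 2]`. -/
theorem stepMap_parity_swap (x : ℚ) (hx : x.den ≠ 1) :
    (stepMap x).num % 2 = (x.den : ℤ) % 2 ∧ ((stepMap x).den : ℤ) % 2 = x.num % 2 := by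
  have h_step : stepMap x = (x - evenFloor x)⁻¹ := if_neg hx
  have h_ne : x - evenFloor x ≠ 0 := rat_sub_intCast_ne_zero_of_den_ne_one hx _
  have h_den : (x - evenFloor x).den = x.den := Rat.sub_intCast_den x _
  have h_num : (x - evenFloor x).num ≡ x.num [ZMOD 2] :=
    rat_num_sub_intCast_modEq x (even_evenFloor hx).two_dvd
  rw [h_step]
  exact ⟨h_den ▸ rat_num_inv_modEq_two_den h_ne, (rat_den_inv_modEq_two_num h_ne).trans h_num⟩
end
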